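/- The collection {F + φ(z) : z ∈ ℤ[1/2]} covers K = ℝ × ℚ₂, i.e., F + φ(ℤ[1/2]) = K. -/

import Mathlib

/-- The diagonal embedding `φ : ℚ → K = ℝ × ℚ₂`, `φ(z) = (z, z)`. -/
noncomputable def phi (z : ℚ) : ℝ × ℚ_[2] := ((z : ℝ), (z : ℚ_[2]))

/-- The tile `F ⊂ K = ℝ × ℚ₂`: all points of the form
`(1/2)·∑_{i=1}^{∞} d_{-i}·φ(1)·(-3/2)^{-i}` with digits `d_{-i} ∈ {0,1,2}`, the series
converging in `K` since multiplication by `(-3/2)⁻¹` contracts both coordinates. -/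
noncomputable def Ftile : Set (ℝ × ℚ_[2]) :=
  {x : ℝ × ℚ_[2] | ∃ d : ℕ → ℕ, (∀ i, d i ≤ 2) ∧
    HasSum (fun i : ℕ => phi ((1 / 2 : ℚ) * (d i : ℚ) * (-3 / 2 : ℚ) ^ (-(i : ℤ) - 1))) x}

/-!
Let `g = φ(-2/3)`, `Γ = φ(ℤ[1/2])` and `E = F + Γ`. Multiplication by `g` contracts `K`. Since
`{0, 1, 2}` represents `ℤ[1/2]` modulo `3`, each `z ∈ Γ` has a digit `d ∈ {φ(0), φ(1/2), φ(1)}` with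
`g (z - d) ∈ Γ`, and prepending `d` to digit expansions shows `g E ⊆ E`. Hence any bound on the
distance from points of `K` to `E` improves by the factor `‖g‖`. Such a bound exists because `Γ` is
relatively dense in `K`, so `E` is dense; it is closed because `F` is compact and `Γ` is uniformly
discrete.
-/

open Filter Metric Set
open scoped ENNReal NNReal Pointwise Topology

theorem eq_univ_of_isClosed_of_contractingWith {X : Type*} [EMetricSpace X] {f : X → X} {K C : ℝ≥0}
    {E : Set X} (hf : ContractingWith K f) (hsurj : f.Surjective) (hE : IsClosed E)
    (hfE : MapsTo f E E) (hcover : IsCover C univ E) : E = univ := by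
  have cover_pow (n : ℕ) : IsCover (K ^ n * C) univ E := by
    induction n with
    | zero => simpa only [pow_zero, one_mul] using hcover
    | succ n ih =>
      rw [pow_succ', mul_assoc]
      exact (ih.image_lipschitz_of_surjective hf.2 hsurj).mono hfE.image_subset
  have radius_tendsto : Tendsto (fun n ↦ ((K ^ n * C : ℝ≥0) : ℝ≥0∞)) atTop (𝓝 0) := by
    simpa only [zero_mul, ENNReal.coe_zero] using
      ENNReal.tendsto_coe.2 ((NNReal.tendsto_pow_atTop_nhds_zero_of_lt_one hf.1).mul_const C)
  refine eq_univ_of_forall fun x ↦ hE.closure_eq ▸ EMetric.mem_closure_iff.2 fun ε hε ↦ ?_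
  obtain ⟨n, hn⟩ := (radius_tendsto.eventually_lt_const hε).exists
  obtain ⟨y, hy, hxy⟩ := cover_pow n (mem_univ x)
  exact ⟨y, hy, lt_of_le_of_lt hxy hn⟩

section DigitTile

/-- The self-affine tile of all sums `∑_{i ≥ 1} gⁱ dᵢ` with digits `dᵢ ∈ D`, where `g` is the
inverse of the base of the number system. Digit `dᵢ` is stored at index `i - 1`. -/
def digitTile {R : Type*} [Semiring R] [TopologicalSpace R] (g : R) (D : Set R) : Set R :=
  {x | ∃ d : ℕ → R, (∀ i, d i ∈ D) ∧ HasSum (fun i ↦ g ^ (i + 1) * d i) x}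

theorem mul_add_mem_digitTile {R : Type*} [Ring R] [TopologicalSpace R] [IsTopologicalRing R]
    {g x d : R} {D : Set R} (hx : x ∈ digitTile g D) (hd : d ∈ D) :
    g * (x + d) ∈ digitTile g D := by
  obtain ⟨e, he, hsum⟩ := hx
  refine ⟨fun i ↦ Nat.casesOn i d e, Nat.rec hd fun i _ ↦ he i, ?_⟩
  rw [← hasSum_nat_add_iff' 1]
  simpa [mul_add, pow_succ', mul_assoc] using hsum.mul_left g

theorem summable_pow_succ_mul {r : ℝ} (hr₀ : 0 ≤ r) (hr₁ : r < 1) (B : ℝ) :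
    Summable fun i : ℕ ↦ r ^ (i + 1) * B :=
  ((summable_nat_add_iff 1).2 (summable_geometric_of_lt_one hr₀ hr₁)).mul_right B

variable {R : Type*} [NormedRing R] {g : R} {D : Set R}

theorem norm_pow_succ_mul_le {d : R} {B : ℝ} (hd : ‖d‖ ≤ B) (i : ℕ) :
    ‖g ^ (i + 1) * d‖ ≤ ‖g‖ ^ (i + 1) * B :=
  (norm_mul_le _ _).trans <| by
    gcongr
    exact norm_pow_le' g i.succ_pos

variable [CompleteSpace R]

theorem digitTile_eq_image (hg : ‖g‖ < 1) (hD : Bornology.IsBounded D) :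
    digitTile g D = (fun d : ℕ → R ↦ ∑' i, g ^ (i + 1) * d i) '' univ.pi fun _ ↦ D := by
  obtain ⟨B, hB⟩ := hD.exists_norm_le
  ext x
  constructor
  · rintro ⟨d, hd, hsum⟩
    exact ⟨d, fun i _ ↦ hd i, hsum.tsum_eq⟩
  · rintro ⟨d, hd, rfl⟩
    have hdD (i : ℕ) : d i ∈ D := hd i (mem_univ i)
    exact ⟨d, hdD, (Summable.of_norm_bounded (summable_pow_succ_mul (norm_nonneg g) hg B)
      fun i ↦ norm_pow_succ_mul_le (hB _ (hdD i)) i).hasSum⟩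

theorem isCompact_digitTile (hg : ‖g‖ < 1) (hD : IsCompact D) : IsCompact (digitTile g D) := by
  obtain ⟨B, hB⟩ := hD.isBounded.exists_norm_le
  rw [digitTile_eq_image hg hD.isBounded]
  refine (isCompact_univ_pi fun _ ↦ hD).image_of_continuousOn ?_
  exact continuousOn_tsum (fun i ↦ by fun_prop) (summable_pow_succ_mul (norm_nonneg g) hg B)
    fun i d hd ↦ norm_pow_succ_mul_le (hB _ (hd i (mem_univ i))) i

theorem digitTile_nonempty (hg : ‖g‖ < 1) (hD : Bornology.IsBounded D) (hne : D.Nonempty) :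
    (digitTile g D).Nonempty := by
  rw [digitTile_eq_image hg hD]
  exact (univ_pi_nonempty_iff.2 fun _ ↦ hne).image _

theorem digitTile_add_eq_univ {Γ : Set R} {C : ℝ≥0} (hunit : IsUnit g) (hg : ‖g‖ < 1)
    (hD : IsCompact D) (hne : D.Nonempty) (hΓ : IsClosed Γ) (hcover : IsCover C univ Γ)
    (hdigit : ∀ z ∈ Γ, ∃ d ∈ D, g * (z - d) ∈ Γ) : digitTile g D + Γ = univ := by
  have contracting : ContractingWith ‖g‖₊ (g * ·) :=
    ⟨hg, LipschitzWith.of_dist_le_mul fun x y ↦ by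
      simpa only [dist_eq_norm, mul_sub, coe_nnnorm] using norm_mul_le g (x - y)⟩
  have closed : IsClosed (digitTile g D + Γ) := hΓ.add_left_of_isCompact (isCompact_digitTile hg hD)
  have mapsTo : MapsTo (g * ·) (digitTile g D + Γ) (digitTile g D + Γ) := by
    rintro _ ⟨t, ht, z, hz, rfl⟩
    obtain ⟨d, hd, hdz⟩ := hdigit z hz
    exact ⟨g * (t + d), mul_add_mem_digitTile ht hd, g * (z - d), hdz, by noncomm_ring⟩
  obtain ⟨t, ht⟩ := digitTile_nonempty hg hD.isBounded hne
  have cover : IsCover C univ (digitTile g D + Γ) := by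
    intro x _
    obtain ⟨z, hz, hxz⟩ := hcover (mem_univ (-t + x))
    refine ⟨t + z, add_mem_add ht hz, ?_⟩
    change edist x (t + z) ≤ C
    rwa [← edist_add_left (-t), neg_add_cancel_left]
  exact eq_univ_of_isClosed_of_contractingWith contracting
    (IsUnit.isUnit_iff_mulLeft_bijective.1 hunit).surjective closed mapsTo cover

end DigitTile

section IntAdjoinInv

/-- The ring `ℤ[1/p]` of quotients of integers by powers of `p`. -/
def intAdjoinInv (p : ℕ) [NeZero p] : Subring ℚ where
  carrier := {z | ∃ (a : ℤ) (l : ℕ), z = a / (p : ℚ) ^ l}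
  zero_mem' := ⟨0, 0, by simp⟩
  one_mem' := ⟨1, 0, by simp⟩
  neg_mem' := by
    rintro _ ⟨a, l, rfl⟩
    exact ⟨-a, l, by push_cast; ring⟩
  add_mem' := by
    rintro _ _ ⟨a, l, rfl⟩ ⟨b, m, rfl⟩
    have hp : (p : ℚ) ≠ 0 := NeZero.ne _
    exact ⟨a * p ^ m + b * p ^ l, l + m, by push_cast; rw [pow_add]; field_simp⟩
  mul_mem' := by
    rintro _ _ ⟨a, l, rfl⟩ ⟨b, m, rfl⟩
    exact ⟨a * b, l + m, by push_cast; rw [pow_add, div_mul_div_comm]⟩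

theorem exists_eq_mul_add_natCast_of_coprime {p b : ℕ} [NeZero p] (hb : 0 < b)
    (hbp : b.Coprime p) {z : ℚ} (hz : z ∈ intAdjoinInv p) :
    ∃ w ∈ intAdjoinInv p, ∃ d < b, z = b * w + d := by
  obtain ⟨a, l, rfl⟩ := hz
  -- `v` inverts `p ^ l` modulo `b`, so the remainder of `a / p ^ l` is `a * v % b`.
  obtain ⟨u, v, huv⟩ : IsCoprime (b : ℤ) ((p : ℤ) ^ l) := by
    exact_mod_cast (hbp.pow_right l).isCoprime
  have hb' : (0 : ℤ) < b := by exact_mod_cast hb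
  obtain ⟨d, hd⟩ := Int.eq_ofNat_of_zero_le ((a * v).emod_nonneg hb'.ne')
  have d_lt : d < b := by exact_mod_cast hd ▸ (a * v).emod_lt_of_pos hb'
  have numerator : a = b * (a * u + a * v / b * p ^ l) + p ^ l * d := by
    linear_combination -a * huv - p ^ l * (a * v).mul_ediv_add_emod b + p ^ l * hd
  refine ⟨_, ⟨a * u + a * v / b * p ^ l, l, rfl⟩, d, d_lt, ?_⟩
  have hp : (p : ℚ) ≠ 0 := NeZero.ne _
  field_simp
  exact_mod_cast numerator

variable {p : ℕ} [Fact p.Prime]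

theorem exists_intCast_eq_of_norm_le_one {z : ℚ} (hz : z ∈ intAdjoinInv p)
    (hnorm : ‖(z : ℚ_[p])‖ ≤ 1) : ∃ n : ℤ, z = n := by
  obtain ⟨a, l, rfl⟩ := hz
  have hp : (0 : ℝ) < p := by exact_mod_cast (Fact.out : p.Prime).pos
  have hpQ : (p : ℚ) ≠ 0 := NeZero.ne _
  have dvd : (p : ℤ) ^ l ∣ a := by
    have : ‖(a : ℚ_[p])‖ ≤ (p : ℝ) ^ (-l : ℤ) := by
      push_cast at hnorm
      rwa [norm_div, Padic.norm_p_pow, div_le_one (by positivity)] at hnorm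
    exact_mod_cast (Padic.norm_int_le_pow_iff_dvd a l).1 this
  obtain ⟨n, rfl⟩ := dvd
  exact ⟨n, by push_cast; field_simp⟩

/-- The diagonal embedding `z ↦ (z, z)` of `ℚ` into `ℝ × ℚ_[p]`, as a ring homomorphism. -/
noncomputable def ratDiagonal (p : ℕ) [Fact p.Prime] : ℚ →+* ℝ × ℚ_[p] :=
  (Rat.castHom ℝ).prod (Rat.castHom ℚ_[p])

theorem norm_ratDiagonal (z : ℚ) : ‖ratDiagonal p z‖ = max |(z : ℝ)| ‖(z : ℚ_[p])‖ := rfl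

theorem one_le_norm_ratDiagonal {z : ℚ} (hz : z ∈ intAdjoinInv p) (hz₀ : z ≠ 0) :
    1 ≤ ‖ratDiagonal p z‖ := by
  rw [norm_ratDiagonal, le_max_iff, or_iff_not_imp_right, not_le]
  intro hnorm
  obtain ⟨n, rfl⟩ := exists_intCast_eq_of_norm_le_one hz hnorm.le
  exact_mod_cast Int.one_le_abs (Int.cast_ne_zero.1 hz₀)

theorem isClosed_ratDiagonal_image_intAdjoinInv : IsClosed (ratDiagonal p '' intAdjoinInv p) := by
  refine isClosed_of_pairwise_le_dist one_pos ?_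
  rintro _ ⟨x, hx, rfl⟩ _ ⟨y, hy, rfl⟩ hne
  rw [dist_eq_norm, ← map_sub]
  exact one_le_norm_ratDiagonal (sub_mem hx hy) (sub_ne_zero.2 (ne_of_apply_ne _ hne))

theorem exists_norm_sub_le_one_of_padic (y : ℚ_[p]) :
    ∃ z ∈ intAdjoinInv p, ‖y - (z : ℚ_[p])‖ ≤ 1 := by
  have hp : (p : ℚ_[p]) ≠ 0 := NeZero.ne _
  have hpR : (1 : ℝ) < p := by exact_mod_cast (Fact.out : p.Prime).one_lt
  obtain ⟨l, hl⟩ := pow_unbounded_of_one_lt ‖y‖ hpR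
  have integral : ‖y * (p : ℚ_[p]) ^ l‖ ≤ 1 := by
    rw [norm_mul, Padic.norm_p_pow, zpow_neg, zpow_natCast]
    exact mul_inv_le_one_of_le₀ hl.le (by positivity)
  obtain ⟨w, hw⟩ : ∃ w : ℤ_[p], (w : ℚ_[p]) = y * (p : ℚ_[p]) ^ l := ⟨⟨_, integral⟩, rfl⟩
  obtain ⟨v, hv⟩ := Ideal.mem_span_singleton.1 (PadicInt.appr_spec l w)
  have fractional_part : y - ((w.appr l / p ^ l : ℚ) : ℚ_[p]) = v := by
    have := congrArg ((↑) : ℤ_[p] → ℚ_[p]) hv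
    push_cast at this ⊢
    rw [hw] at this
    field_simp
    linear_combination this
  exact ⟨w.appr l / p ^ l, ⟨w.appr l, l, by simp⟩, fractional_part ▸ v.2⟩

theorem exists_norm_sub_ratDiagonal_le_one (x : ℝ × ℚ_[p]) :
    ∃ z ∈ intAdjoinInv p, ‖x - ratDiagonal p z‖ ≤ 1 := by
  obtain ⟨z, hz, hxz⟩ := exists_norm_sub_le_one_of_padic x.2
  let n : ℤ := ⌊x.1 - z⌋
  refine ⟨z + n, add_mem hz (intCast_mem _ n), max_le ?_ ?_⟩
  · change |x.1 - ((z + n : ℚ) : ℝ)| ≤ 1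
    push_cast
    rw [← sub_sub, Int.self_sub_floor, Int.abs_fract]
    exact (Int.fract_lt_one _).le
  · change ‖x.2 - ((z + n : ℚ) : ℚ_[p])‖ ≤ 1
    push_cast
    rw [← sub_sub, sub_eq_add_neg]
    refine (Padic.nonarchimedean _ _).trans (max_le hxz ?_)
    exact (norm_neg _).trans_le (Padic.norm_int_le_one n)

theorem isCover_ratDiagonal_image_intAdjoinInv :
    IsCover 1 univ (ratDiagonal p '' intAdjoinInv p) := by
  intro x _
  obtain ⟨z, hz, hxz⟩ := exists_norm_sub_ratDiagonal_le_one x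
  exact ⟨_, mem_image_of_mem _ hz, edist_le_coe.2 (by rwa [nndist_eq_nnnorm])⟩

end IntAdjoinInv

/-- The digits `φ(d / 2)`, `d ∈ {0, 1, 2}`, of the tile `F`; its prefactor `1 / 2` is absorbed here
so that `F` is a `digitTile`. -/
noncomputable def ftileDigits : Set (ℝ × ℚ_[2]) :=
  (fun d : ℕ ↦ ratDiagonal 2 (d / 2)) '' Iic 2

theorem ftileDigits_finite : ftileDigits.Finite :=
  (finite_Iic 2).image _

theorem ftileDigits_nonempty : ftileDigits.Nonempty :=
  nonempty_Iic.image _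

theorem Ftile_eq_digitTile : Ftile = digitTile (ratDiagonal 2 (-2 / 3)) ftileDigits := by
  have term_eq (d i : ℕ) : phi (1 / 2 * d * (-3 / 2) ^ (-(i : ℤ) - 1)) =
      ratDiagonal 2 (-2 / 3) ^ (i + 1) * ratDiagonal 2 (d / 2) := by
    have exponent : -(i : ℤ) - 1 = -((i + 1 : ℕ) : ℤ) := by push_cast; ring
    have inverse : (-3 / 2 : ℚ)⁻¹ = -2 / 3 := by norm_num
    rw [← map_pow, ← map_mul, exponent, zpow_neg, zpow_natCast, ← inv_pow, inverse]
    exact congrArg phi (by ring)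
  ext x
  constructor
  · rintro ⟨d, hd, hsum⟩
    exact ⟨_, fun i ↦ mem_image_of_mem _ (hd i), by simpa only [term_eq] using hsum⟩
  · rintro ⟨e, he, hsum⟩
    choose d hd hde using he
    exact ⟨d, hd, by simpa only [term_eq, hde] using hsum⟩

theorem norm_ratDiagonal_neg_two_thirds_lt_one : ‖ratDiagonal 2 (-2 / 3)‖ < 1 := by
  have three_norm : ‖((3 : ℕ) : ℚ_[2])‖ = 1 := Padic.norm_natCast_eq_one_iff.2 (by norm_num)
  have two_norm : ‖((2 : ℕ) : ℚ_[2])‖ = 2⁻¹ := by simpa using Padic.norm_p (p := 2)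
  push_cast at three_norm two_norm
  rw [norm_ratDiagonal]
  push_cast
  rw [norm_div, norm_neg, two_norm, three_norm, max_lt_iff, abs_lt]
  norm_num

theorem exists_ftileDigits_mul_sub_mem {z : ℝ × ℚ_[2]} (hz : z ∈ ratDiagonal 2 '' intAdjoinInv 2) :
    ∃ d ∈ ftileDigits, ratDiagonal 2 (-2 / 3) * (z - d) ∈ ratDiagonal 2 '' intAdjoinInv 2 := by
  obtain ⟨q, hq, rfl⟩ := hz
  obtain ⟨w, hw, d, hd, two_mul_eq⟩ :
      ∃ w ∈ intAdjoinInv 2, ∃ d : ℕ, d < 3 ∧ (2 : ℕ) * q = (3 : ℕ) * w + d :=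
    exists_eq_mul_add_natCast_of_coprime (by norm_num) (by norm_num) (mul_mem (natCast_mem _ 2) hq)
  refine ⟨_, mem_image_of_mem _ (Nat.le_of_lt_succ hd), -w, neg_mem hw, ?_⟩
  rw [← map_sub, ← map_mul]
  congr 1
  push_cast at two_mul_eq
  linear_combination (1 / 3) * two_mul_eq

/-- The collection `{F + φ(z) : z ∈ ℤ[1/2]}` covers `K = ℝ × ℚ₂`,
i.e. `F + φ(ℤ[1/2]) = K`. -/
theorem Ftile_translates_cover :
    {x : ℝ × ℚ_[2] | ∃ f ∈ Ftile, ∃ z : ℚ,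
        (∃ (a : ℤ) (ℓ : ℕ), z = (a : ℚ) / 2 ^ ℓ) ∧ x = f + phi z} =
      Set.univ := by
  have isUnit_ratio : IsUnit (ratDiagonal 2 (-2 / 3)) :=
    (IsUnit.mk0 _ (by norm_num)).map (ratDiagonal 2)
  have cover : Ftile + ratDiagonal 2 '' intAdjoinInv 2 = univ := by
    rw [Ftile_eq_digitTile]
    exact digitTile_add_eq_univ isUnit_ratio norm_ratDiagonal_neg_two_thirds_lt_one
      ftileDigits_finite.isCompact ftileDigits_nonempty isClosed_ratDiagonal_image_intAdjoinInv
      isCover_ratDiagonal_image_intAdjoinInv fun _ ↦ exists_ftileDigits_mul_sub_mem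
  refine eq_univ_of_forall fun x ↦ ?_
  obtain ⟨f, hf, _, ⟨z, hz, rfl⟩, rfl⟩ := cover.ge (mem_univ x)
  exact ⟨f, hf, z, hz, rfl⟩
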